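/- arXiv:1501.01652 — 4 statements merged into one kernel-verified Lean document; each statement's English description precedes it below -/
import Mathlib

section
/- Let q be a real number with 0 ≤ q < 1/2 and let K ≥ 1 be an integer. Then the series ∑_{s=K}^∞ (q/s)^s converges and satisfies ∑_{s=K}^∞ (q/s)^s ≤ 2.6·q^K. -/
/-!
Since `4 ^ s ≤ (s + 1) ^ (s + 1) ≤ (K + s) ^ (K + s)`, the term of index `K + s` has norm at most
`‖q‖ ^ K * (‖q‖ / 4) ^ s`, and these bounds sum to `‖q‖ ^ K / (1 - ‖q‖ / 4)`. For `0 ≤ q < 1 / 2`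
the factor `(1 - q / 4)⁻¹` is below `8 / 7`.
-/

theorem four_pow_le_succ_pow_succ : ∀ n : ℕ, 4 ^ n ≤ (n + 1) ^ (n + 1)
  | 0 | 1 | 2 => by norm_num
  | n + 3 => calc
      4 ^ (n + 3) ≤ (n + 4) ^ (n + 3) := Nat.pow_le_pow_left (by lia) _
      _ ≤ (n + 4) ^ (n + 4) := Nat.pow_le_pow_right (by lia) (by lia)

theorem four_pow_le_add_pow_add {K : ℕ} (hK : 1 ≤ K) (s : ℕ) : 4 ^ s ≤ (K + s) ^ (K + s) := by
  have h : s + 1 ≤ K + s := by lia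
  exact (four_pow_le_succ_pow_succ s).trans (Nat.pow_self_mono h)

theorem norm_div_add_pow_add_le {𝕜 : Type*} [RCLike 𝕜] (q : 𝕜) {K : ℕ} (hK : 1 ≤ K) (s : ℕ) :
    ‖(q / ((K : 𝕜) + s)) ^ (K + s)‖ ≤ ‖q‖ ^ K * (‖q‖ / 4) ^ s := by
  have h4 : (4 : ℝ) ^ s ≤ ((K + s : ℕ) : ℝ) ^ (K + s) := mod_cast four_pow_le_add_pow_add hK s
  calc ‖(q / ((K : 𝕜) + s)) ^ (K + s)‖ = ‖q‖ ^ (K + s) / ((K + s : ℕ) : ℝ) ^ (K + s) := by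
        rw [← Nat.cast_add, norm_pow, norm_div, RCLike.norm_natCast, div_pow]
    _ ≤ ‖q‖ ^ (K + s) / 4 ^ s := by gcongr
    _ = ‖q‖ ^ K * (‖q‖ / 4) ^ s := by rw [pow_add, div_pow, mul_div_assoc]

theorem tail_sum_q_div_s_pow_le_general {𝕜 : Type*} [RCLike 𝕜] (q : 𝕜) (hq : ‖q‖ < 4)
    (K : ℕ) (hK : 1 ≤ K) :
    Summable (fun s : ℕ => (q / ((K : 𝕜) + s)) ^ (K + s)) ∧
    ‖∑' s : ℕ, (q / ((K : 𝕜) + s)) ^ (K + s)‖ ≤ ‖q‖ ^ K / (1 - ‖q‖ / 4) := by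
  have hgeom : HasSum (fun s : ℕ => ‖q‖ ^ K * (‖q‖ / 4) ^ s) (‖q‖ ^ K / (1 - ‖q‖ / 4)) :=
    (hasSum_geometric_of_lt_one (by positivity) (by linarith)).mul_left _
  have hterm := norm_div_add_pow_add_le q hK
  exact ⟨.of_norm_bounded hgeom.summable hterm, tsum_of_norm_bounded hgeom hterm⟩

theorem pow_div_one_sub_div_four_le {q : ℝ} (hq0 : 0 ≤ q) (hq : q ≤ 32 / 13) (K : ℕ) :
    q ^ K / (1 - q / 4) ≤ 2.6 * q ^ K := by
  rw [div_le_iff₀ (by linarith)]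
  -- `32 / 13` is the root of `2.6 * (1 - q / 4) = 1`.
  have hfactor : 1 ≤ 2.6 * (1 - q / 4) := by linarith
  calc q ^ K ≤ q ^ K * (2.6 * (1 - q / 4)) := le_mul_of_one_le_right (by positivity) hfactor
    _ = 2.6 * q ^ K * (1 - q / 4) := by ring

/-- The tail series `∑_{s=K}^∞ (q/s)^s` converges and is bounded by `2.6 q^K`
for `0 ≤ q < 1/2`. -/
theorem tail_sum_q_div_s_pow_le (q : ℝ) (hq0 : 0 ≤ q) (hq1 : q < 1 / 2) (K : ℕ) (hK : 1 ≤ K) :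
    Summable (fun s : ℕ => (q / ((K : ℝ) + s)) ^ (K + s)) ∧
    ∑' s : ℕ, (q / ((K : ℝ) + s)) ^ (K + s) ≤ 2.6 * q ^ K := by
  have hnorm : ‖q‖ = q := Real.norm_of_nonneg hq0
  obtain ⟨hsum, hle⟩ := tail_sum_q_div_s_pow_le_general q (by linarith) K hK
  rw [hnorm] at hle
  exact ⟨hsum, (Real.le_norm_self _).trans
    (hle.trans (pow_div_one_sub_div_four_le hq0 (by linarith) K))⟩
end

section
/- Let N ≥ 1 be an integer and let j_1, …, j_{N+1} be real numbers such that for every 1 ≤ n ≤ N+1 one can write j_n = (n − 1/4)·π + b_n with 0 ≤ b_n ≤ 1/(8·(n − 1/4)·π). Then for every 1 ≤ k ≤ N, |j_k/j_{N+1} − (k − 1/4)/(N + 3/4)| ≤ 1/(8·(N + 3/4)·(k − 1/4)·π²). -/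
/-! For perturbations `0 ≤ b ≤ δ / u` and `0 ≤ c ≤ δ / v` of `0 < u ≤ v`, write
`(u + b) / (v + c) - u / v = (b - (u / v) * c) / (v + c)`. Both `b` and `(u / v) * c` lie in
`[0, δ / u]`, so their difference is at most `δ / u` in absolute value, without the factor `2` that
the triangle inequality would cost, and the denominator is at least `v`. Here
`u = (k - 1/4) π`, `v = (N + 3/4) π` and `δ = 1/8`. -/

section RatioPerturbation

variable {K : Type*} [Field K]

theorem add_div_add_sub_div {u v b c : K} (hv : v ≠ 0) (hvc : v + c ≠ 0) :
    (u + b) / (v + c) - u / v = (b - u / v * c) / (v + c) := by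
  field_simp
  ring

variable [LinearOrder K] [IsStrictOrderedRing K] {u v b c : K}

theorem abs_add_div_add_sub_div_le {ε : K} (hv : 0 < v) (hu : 0 ≤ u) (huv : u ≤ v)
    (hb₀ : 0 ≤ b) (hb : b ≤ ε) (hc₀ : 0 ≤ c) (hc : c ≤ ε) :
    |(u + b) / (v + c) - u / v| ≤ ε / v := by
  have hvc : 0 < v + c := add_pos_of_pos_of_nonneg hv hc₀
  have hratio : u / v ≤ 1 := div_le_one_of_le₀ huv hv.le
  have hscaled₀ : 0 ≤ u / v * c := by positivity
  have hscaled : u / v * c ≤ ε := (mul_le_of_le_one_left hc₀ hratio).trans hc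
  calc |(u + b) / (v + c) - u / v|
      = |b - u / v * c| / (v + c) := by
        rw [add_div_add_sub_div hv.ne' hvc.ne', abs_div, abs_of_pos hvc]
    _ ≤ ε / (v + c) := by
        gcongr
        exact abs_sub_le_of_nonneg_of_le hb₀ hb hscaled₀ hscaled
    _ ≤ ε / v :=
        div_le_div_of_nonneg_left (hb₀.trans hb) hv (le_add_of_nonneg_right hc₀)

theorem abs_add_div_add_sub_div_le_of_le_div {δ : K} (hu : 0 < u) (huv : u ≤ v)
    (hb₀ : 0 ≤ b) (hb : b ≤ δ / u) (hc₀ : 0 ≤ c) (hc : c ≤ δ / v) :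
    |(u + b) / (v + c) - u / v| ≤ δ / (u * v) := by
  have hv : 0 < v := hu.trans_le huv
  have hδ : 0 ≤ δ := by simpa only [zero_mul] using (le_div_iff₀ hu).mp (hb₀.trans hb)
  have hc' : c ≤ δ / u := hc.trans (div_le_div_of_nonneg_left hδ hu huv)
  simpa only [div_div] using abs_add_div_add_sub_div_le hv hu.le huv hb₀ hb hc₀ hc'

end RatioPerturbation

/-- Ratios of perturbed equally-spaced points (such as the positive roots of `J_0`)
form a small perturbation of the equally-spaced grid `(k - 1/4)/(N + 3/4)`. -/
theorem bessel_root_ratio_perturbation (N : ℕ) (hN : 1 ≤ N) (j : ℕ → ℝ)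
    (hj : ∀ n : ℕ, 1 ≤ n → n ≤ N + 1 → ∃ b : ℝ,
      j n = ((n : ℝ) - 1 / 4) * Real.pi + b ∧ 0 ≤ b ∧
        b ≤ 1 / (8 * ((n : ℝ) - 1 / 4) * Real.pi)) :
    ∀ k : ℕ, 1 ≤ k → k ≤ N →
      |j k / j (N + 1) - ((k : ℝ) - 1 / 4) / ((N : ℝ) + 3 / 4)| ≤
        1 / (8 * ((N : ℝ) + 3 / 4) * ((k : ℝ) - 1 / 4) * Real.pi ^ 2) := by
  intro k hk hkN
  obtain ⟨b, hjk, hb₀, hb⟩ := hj k hk (hkN.trans N.le_succ)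
  obtain ⟨c, hjN, hc₀, hc⟩ := hj (N + 1) N.succ_pos le_rfl
  have hlast : ((N + 1 : ℕ) : ℝ) - 1 / 4 = N + 3 / 4 := by push_cast; ring
  rw [hlast] at hjN hc
  have hk' : (1 : ℝ) ≤ k := by exact_mod_cast hk
  have hkN' : (k : ℝ) ≤ N := by exact_mod_cast hkN
  have hu : 0 < ((k : ℝ) - 1 / 4) * Real.pi := mul_pos (by linarith) Real.pi_pos
  have huv : ((k : ℝ) - 1 / 4) * Real.pi ≤ (N + 3 / 4) * Real.pi :=
    mul_le_mul_of_nonneg_right (by linarith) Real.pi_pos.le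
  rw [mul_assoc, ← div_div] at hb hc
  calc |j k / j (N + 1) - ((k : ℝ) - 1 / 4) / (N + 3 / 4)|
      = |(((k : ℝ) - 1 / 4) * Real.pi + b) / ((N + 3 / 4) * Real.pi + c) -
          ((k : ℝ) - 1 / 4) * Real.pi / ((N + 3 / 4) * Real.pi)| := by
        rw [hjk, hjN, mul_div_mul_right _ _ Real.pi_ne_zero]
    _ ≤ 1 / 8 / (((k : ℝ) - 1 / 4) * Real.pi * ((N + 3 / 4) * Real.pi)) :=
        abs_add_div_add_sub_div_le_of_le_div hu huv hb₀ hb hc₀ hc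
    _ = 1 / (8 * ((N : ℝ) + 3 / 4) * ((k : ℝ) - 1 / 4) * Real.pi ^ 2) := by
        rw [div_div]
        congr 1
        ring
end

section
/- Let ν be an integer and let u, v, w be real numbers. Then J_ν(u·(v + w)) = ∑_{s∈ℤ} ∑_{t=0}^∞ ((−1)^t · 2^(−2t−s) / (t! · Γ(t+s+1))) · J_{ν−s}(u·v) · (u·w)^(2t+s), where 1/Γ(m+1) is interpreted as 0 when m is a negative integer (so all terms with t + s < 0 vanish, and every surviving exponent 2t + s is a nonnegative integer), and the double series converges absolutely. Consequently, for column vectors u, v, w ∈ ℝ^N, the N×N matrix with (k,n) entry J_ν(u_k·(v_n + w_n)) equals ∑_{s∈ℤ} ∑_{t=0}^∞ ((−1)^t 2^(−2t−s)/(t!·Γ(t+s+1))) · D_u^(2t+s) · A_{ν−s} · D_w^(2t+s), where A_m is the matrix with (k,n) entry J_m(u_k v_n) and D_u, D_w are the diagonal matrices with diagonals u, w. -/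
/-!
The Bessel functions are the Laurent coefficients of `exp (x z) exp (-x / z) = ∑ₙ Jₙ(2x) zⁿ`, so
`Jₙ(2x)` is the sum of `x ^ a / a! * (-x) ^ b / b!` over the pairs `(a, b)` with `a - b = n`.
By the binomial theorem the double series of `x + y` is the convolution of those of `x` and `y`.
Both converge absolutely, so the part of degree `ν` of their product may be summed first over the
indices belonging to `x`, which produces the values `J_{ν-s}(2x)`. What is left is a sum over the
index `(a, b)` belonging to `y`, and `s = a - b`, `t = b` turns its coefficients into
`(-1)^t 2^(-2t-s) / (t! Γ(t+s+1))`.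
-/

/-- Bessel function of the first kind of nonnegative integer order, defined by its
everywhere absolutely convergent power series. -/
noncomputable def besselJNat (n : ℕ) (z : ℝ) : ℝ :=
  ∑' t : ℕ, ((-1 : ℝ) ^ t / ((t.factorial : ℝ) * ((t + n).factorial : ℝ))) * (z / 2) ^ (2 * t + n)

/-- Bessel function of the first kind of integer order, with `J_{-n} = (-1)^n J_n`. -/
noncomputable def besselJ (n : ℤ) (z : ℝ) : ℝ :=
  if 0 ≤ n then besselJNat n.toNat z else (-1 : ℝ) ^ (-n).toNat * besselJNat (-n).toNat z

/-- The coefficient `(-1)^t 2^(-2t-s) / (t! Γ(t+s+1))`; since `1/Γ` vanishes at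
nonpositive integers (and division by zero is zero in Lean), terms with `t + s < 0` vanish. -/
noncomputable def neumannTaylorCoeff (t : ℕ) (s : ℤ) : ℝ :=
  (-1 : ℝ) ^ t * (2 : ℝ) ^ (-(2 * (t : ℤ)) - s) /
    ((t.factorial : ℝ) * Real.Gamma (((t : ℤ) + s + 1 : ℤ) : ℝ))

open Finset.HasAntidiagonal (antidiagonal mem_antidiagonal)

theorem add_pow_div_factorial {K : Type*} [Field K] [CharZero K] (x y : K) (n : ℕ) :
    (x + y) ^ n / (n.factorial : K) =
      ∑ k ∈ antidiagonal n,
        x ^ k.1 / (k.1.factorial : K) * (y ^ k.2 / (k.2.factorial : K)) := by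
  simpa [PowerSeries.coeff_mul, div_eq_mul_inv] using
    (congrArg (PowerSeries.coeff n) (PowerSeries.exp_mul_exp_eq_exp_add x y)).symm

instance instHasAntidiagonalProd {A B : Type*} [AddMonoid A] [AddMonoid B]
    [Finset.HasAntidiagonal A] [Finset.HasAntidiagonal B] : Finset.HasAntidiagonal (A × B) where
  antidiagonal p :=
    (antidiagonal p.1 ×ˢ antidiagonal p.2).map (Equiv.prodProdProdComm A A B B).toEmbedding
  mem_antidiagonal := by simp [Prod.ext_iff]

theorem sum_antidiagonal_prod {A B M : Type*} [AddMonoid A] [AddMonoid B]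
    [Finset.HasAntidiagonal A] [Finset.HasAntidiagonal B] [AddCommMonoid M] (p : A × B)
    (f : (A × B) × (A × B) → M) :
    ∑ k ∈ antidiagonal p, f k =
      ∑ i ∈ antidiagonal p.1, ∑ j ∈ antidiagonal p.2, f ((i.1, j.1), (i.2, j.2)) :=
  (Finset.sum_map _ _ _).trans (Finset.sum_product _ _ _)

theorem hasSum_sum_antidiagonal {A M : Type*} [AddMonoid A] [Finset.HasAntidiagonal A]
    [AddCommMonoid M] [TopologicalSpace M] [ContinuousAdd M] [RegularSpace M] {f : A × A → M}
    {s : M} (hf : HasSum f s) : HasSum (fun r => ∑ k ∈ antidiagonal r, f k) s :=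
  (Finset.HasAntidiagonal.sigmaAntidiagonalEquivProd.hasSum_iff.2 hf).sigma fun r =>
    Finset.hasSum (antidiagonal r) f

theorem sum_antidiagonal_indicator {A M : Type*} [AddMonoid A] [Finset.HasAntidiagonal A]
    [AddCommMonoid M] (s : Set A) (f : A × A → M) (r : A) :
    ∑ k ∈ antidiagonal r, {q : A × A | q.1 + q.2 ∈ s}.indicator f k =
      s.indicator (fun r => ∑ k ∈ antidiagonal r, f k) r := by
  have hmem {k : A × A} (hk : k ∈ antidiagonal r) : k ∈ {q : A × A | q.1 + q.2 ∈ s} ↔ r ∈ s := by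
    rw [Set.mem_ofPred_eq, mem_antidiagonal.1 hk]
  by_cases hr : r ∈ s
  · rw [Set.indicator_of_mem hr]
    exact Finset.sum_congr rfl fun k hk => Set.indicator_of_mem ((hmem hk).2 hr) f
  · rw [Set.indicator_of_notMem hr]
    exact Finset.sum_eq_zero fun k hk => Set.indicator_of_notMem (mt (hmem hk).1 hr) f

/-- The coefficient of the term of index `(a, b)`, a multiple of `z ^ (a - b)`, in the product of
the exponential series of `x z` and `-x / z`. This product generates the Bessel functions at
`2x`. -/
noncomputable def besselExpTerm (x : ℝ) (p : ℕ × ℕ) : ℝ :=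
  x ^ p.1 / (p.1.factorial : ℝ) * ((-x) ^ p.2 / (p.2.factorial : ℝ))

/-- The indices `(a, b)` of the terms in `z ^ n` of the product of the exponential series of `x z`
and `-x / z`. -/
def besselExpIndices (n : ℤ) : Set (ℕ × ℕ) :=
  {p | (p.1 : ℤ) - p.2 = n}

theorem mem_besselExpIndices {n : ℤ} {p : ℕ × ℕ} :
    p ∈ besselExpIndices n ↔ (p.1 : ℤ) - p.2 = n :=
  Iff.rfl

theorem range_eq_besselExpIndices (n : ℤ) :
    Set.range (fun t : ℕ => (t + n.toNat, t + (-n).toNat)) = besselExpIndices n := by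
  ext p
  rw [mem_besselExpIndices]
  refine ⟨?_, fun h => ⟨min p.1 p.2, by ext <;> dsimp only <;> lia⟩⟩
  rintro ⟨t, rfl⟩
  lia

theorem add_mem_besselExpIndices {n : ℤ} {p q : ℕ × ℕ} :
    p + q ∈ besselExpIndices n ↔ q ∈ besselExpIndices (n - (p.1 - p.2)) := by
  simp only [mem_besselExpIndices, Prod.fst_add, Prod.snd_add]
  lia

theorem summable_norm_besselExpTerm (x : ℝ) : Summable fun p => ‖besselExpTerm x p‖ :=
  Summable.mul_norm (f := fun a : ℕ => x ^ a / (a.factorial : ℝ))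
    (g := fun b : ℕ => (-x) ^ b / (b.factorial : ℝ))
    (Real.summable_pow_div_factorial x).norm (Real.summable_pow_div_factorial (-x)).norm

theorem besselExpTerm_add (x y : ℝ) (p : ℕ × ℕ) :
    besselExpTerm (x + y) p = ∑ k ∈ antidiagonal p, besselExpTerm x k.1 * besselExpTerm y k.2 := by
  simp only [sum_antidiagonal_prod, besselExpTerm, neg_add, add_pow_div_factorial,
    Finset.sum_mul_sum, mul_mul_mul_comm]

theorem hasSum_besselJNat_two_mul (n : ℕ) (x : ℝ) :
    HasSum (fun t : ℕ => besselExpTerm x (t + n, t)) (besselJNat n (2 * x)) := by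
  have hinj : Function.Injective fun t : ℕ => (t + n, t) := fun _ _ h => congrArg Prod.snd h
  refine ((summable_norm_besselExpTerm x).of_norm.comp_injective hinj).hasSum_iff.2
    (tsum_congr fun t => ?_)
  rw [Function.comp_apply, besselExpTerm, mul_div_cancel_left₀ _ two_ne_zero, neg_pow x t]
  ring

theorem besselExpTerm_add_right (x : ℝ) (n t : ℕ) :
    besselExpTerm x (t, t + n) = (-1) ^ n * besselExpTerm x (t + n, t) := by
  rw [besselExpTerm, besselExpTerm, neg_pow x t, neg_pow x (t + n)]
  ring

theorem hasSum_besselJ_two_mul (n : ℤ) (x : ℝ) :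
    HasSum (fun t : ℕ => besselExpTerm x (t + n.toNat, t + (-n).toNat)) (besselJ n (2 * x)) := by
  unfold besselJ
  split_ifs with hn
  · simpa [Int.toNat_eq_zero.2 (neg_nonpos.2 hn)] using hasSum_besselJNat_two_mul n.toNat x
  · simpa [Int.toNat_eq_zero.2 (not_le.1 hn).le, besselExpTerm_add_right] using
      (hasSum_besselJNat_two_mul (-n).toNat x).mul_left ((-1) ^ (-n).toNat)

theorem hasSum_indicator_besselExpTerm (n : ℤ) (x : ℝ) :
    HasSum ((besselExpIndices n).indicator (besselExpTerm x)) (besselJ n (2 * x)) := by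
  have hinj : Function.Injective fun t : ℕ => (t + n.toNat, t + (-n).toNat) := fun a b h => by
    simpa using congrArg Prod.fst h
  rw [← range_eq_besselExpIndices, ← hasSum_subtype_iff_indicator]
  exact hinj.hasSum_range_iff.2 (hasSum_besselJ_two_mul n x)

theorem hasSum_indicator_besselExpTerm_mul (n : ℤ) (x y : ℝ) :
    HasSum ({q : (ℕ × ℕ) × (ℕ × ℕ) | q.1 + q.2 ∈ besselExpIndices n}.indicator
      fun q => besselExpTerm x q.1 * besselExpTerm y q.2) (besselJ n (2 * (x + y))) := by
  have hsum := ((summable_mul_of_summable_norm (summable_norm_besselExpTerm x)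
    (summable_norm_besselExpTerm y)).indicator {q | q.1 + q.2 ∈ besselExpIndices n}).hasSum
  have hconv := hasSum_sum_antidiagonal hsum
  simp only [sum_antidiagonal_indicator, ← besselExpTerm_add] at hconv
  rwa [hconv.unique (hasSum_indicator_besselExpTerm n (x + y))] at hsum

theorem hasSum_besselExpTerm_mul_besselJ (n : ℤ) (x y : ℝ) :
    HasSum (fun p : ℕ × ℕ => besselExpTerm y p * besselJ (n - (p.1 - p.2)) (2 * x))
      (besselJ n (2 * (x + y))) := by
  rw [add_comm x y]
  refine (hasSum_indicator_besselExpTerm_mul n y x).prod_fiberwise fun p => ?_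
  classical
  simpa only [Set.indicator_apply, Set.mem_ofPred_eq, add_mem_besselExpIndices, mul_ite, mul_zero]
    using (hasSum_indicator_besselExpTerm (n - (p.1 - p.2)) x).mul_left (besselExpTerm y p)

theorem neumannTaylorCoeff_eq_zero {t : ℕ} {s : ℤ} (h : (t : ℤ) + s < 0) :
    neumannTaylorCoeff t s = 0 := by
  obtain ⟨m, hm⟩ : ∃ m : ℕ, (t : ℤ) + s + 1 = -(m : ℤ) := Int.exists_eq_neg_ofNat (by lia)
  simp [neumannTaylorCoeff, hm, Real.Gamma_neg_nat_eq_zero]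

theorem neumannTaylorCoeff_mul_zpow (a b : ℕ) (x : ℝ) :
    neumannTaylorCoeff b (a - b) * (2 * x) ^ (2 * (b : ℤ) + (a - b)) = besselExpTerm x (a, b) := by
  have hexp : 2 * (b : ℤ) + (a - b) = (a + b : ℕ) := by push_cast; ring
  have hexp_neg : -(2 * (b : ℤ)) - (a - b) = -(a + b : ℕ) := by push_cast; ring
  have hgamma : Real.Gamma (((b : ℤ) + (a - b) + 1 : ℤ) : ℝ) = a.factorial := by
    rw [add_sub_cancel]
    exact_mod_cast Real.Gamma_nat_eq_factorial a
  rw [neumannTaylorCoeff, besselExpTerm, hexp, hexp_neg, hgamma, zpow_neg, zpow_natCast,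
    zpow_natCast, neg_pow x b, mul_pow]
  field_simp
  ring

theorem hasSum_neumannTaylorCoeff_mul_besselJ (ν : ℤ) (x y : ℝ) :
    HasSum (fun p : ℤ × ℕ =>
      neumannTaylorCoeff p.2 p.1 * besselJ (ν - p.1) x * y ^ (2 * (p.2 : ℤ) + p.1))
      (besselJ ν (x + y)) := by
  obtain ⟨x, rfl⟩ : ∃ z, x = 2 * z := ⟨x / 2, by ring⟩
  obtain ⟨y, rfl⟩ : ∃ z, y = 2 * z := ⟨y / 2, by ring⟩
  let index : ℕ × ℕ → ℤ × ℕ := fun p => ((p.1 : ℤ) - p.2, p.2)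
  have hinj : index.Injective := fun p q h => by
    simp only [index, Prod.mk.injEq] at h
    ext <;> lia
  refine (hinj.hasSum_iff fun p hp => ?_).1 ?_
  · have hneg : (p.2 : ℤ) + p.1 < 0 := by
      by_contra! h
      exact hp ⟨((p.2 + p.1 : ℤ).toNat, p.2), by ext <;> simp only [index]; lia⟩
    rw [neumannTaylorCoeff_eq_zero hneg, zero_mul, zero_mul]
  · rw [← mul_add]
    convert hasSum_besselExpTerm_mul_besselJ ν x y using 2 with p
    rw [← neumannTaylorCoeff_mul_zpow]
    exact mul_right_comm _ _ _

theorem bessel_neumann_taylor_decomposition_general {m n : Type*} [Fintype m] [DecidableEq m]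
    [Fintype n] [DecidableEq n] (ν : ℤ) (u : m → ℝ) (v w : n → ℝ) :
    HasSum (fun p : ℤ × ℕ => neumannTaylorCoeff p.2 p.1 •
        (Matrix.diagonal (fun k => u k ^ (2 * (p.2 : ℤ) + p.1)) *
          (Matrix.of fun k l => besselJ (ν - p.1) (u k * v l)) *
          Matrix.diagonal (fun l => w l ^ (2 * (p.2 : ℤ) + p.1))))
      (Matrix.of fun k l => besselJ ν (u k * (v l + w l))) := by
  refine Pi.hasSum.2 fun k => Pi.hasSum.2 fun l => ?_
  rw [Matrix.of_apply, mul_add]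
  convert hasSum_neumannTaylorCoeff_mul_besselJ ν (u k * v l) (u k * w l) using 2 with p
  rw [Matrix.smul_apply, Matrix.mul_diagonal, Matrix.diagonal_mul, Matrix.of_apply, smul_eq_mul,
    mul_zpow]
  ring

/-- Combination of the Neumann addition formula with the Taylor expansion of `J_s`:
scalar identity with absolute convergence, and the resulting matrix decomposition. -/
theorem bessel_neumann_taylor_decomposition (ν : ℤ) :
    (∀ u v w : ℝ,
      Summable (fun p : ℤ × ℕ =>
        |neumannTaylorCoeff p.2 p.1 * besselJ (ν - p.1) (u * v) *
          (u * w) ^ (2 * (p.2 : ℤ) + p.1)|) ∧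
      besselJ ν (u * (v + w)) =
        ∑' s : ℤ, ∑' t : ℕ,
          neumannTaylorCoeff t s * besselJ (ν - s) (u * v) * (u * w) ^ (2 * (t : ℤ) + s)) ∧
    (∀ N : ℕ, ∀ u v w : Fin N → ℝ,
      (Matrix.of fun k n : Fin N => besselJ ν (u k * (v n + w n))) =
        ∑' s : ℤ, ∑' t : ℕ,
          neumannTaylorCoeff t s •
            (Matrix.diagonal (fun k => u k ^ (2 * (t : ℤ) + s)) *
              (Matrix.of fun k n : Fin N => besselJ (ν - s) (u k * v n)) *
              Matrix.diagonal (fun k => w k ^ (2 * (t : ℤ) + s)))) := by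
  refine ⟨fun u v w => ?_, fun N u v w => ?_⟩
  · have hsum := hasSum_neumannTaylorCoeff_mul_besselJ ν (u * v) (u * w)
    exact ⟨hsum.summable.abs, by rw [mul_add, ← hsum.tsum_eq, hsum.summable.tsum_prod]⟩
  · have hsum := bessel_neumann_taylor_decomposition_general ν u v w
    rw [← hsum.tsum_eq, hsum.summable.tsum_prod]
end

section
/- Let N ≥ 1 be an integer and let j_1, …, j_{N+1} be real numbers such that for every 1 ≤ n ≤ N+1 one can write j_n = (n − 1/4)·π + b_n with 0 ≤ b_n ≤ 1/(8·(n − 1/4)·π). For 1 ≤ k ≤ N define e_{k,N} = j_k/j_{N+1} − (k − 1/4)/(N + 3/4). Then for all 1 ≤ k, n ≤ N, |e_{k,N}| · j_n ≤ 1.01/(8·(k − 1/4)·π). -/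
/-!
Write `x n = (n - s) * h` for the unperturbed roots and `j n = x n + b n`, where
`0 ≤ b n ≤ β n := C / x n`. Then
`j k / j M - x k / x M = (b k - x k / x M * b M) / j M`,
and both terms of the numerator lie in `[0, β k]`, because `x k ≤ x M` and `β` is decreasing.
Hence the left-hand side is at most `β k / j M` in absolute value. The perturbations do not exceed
the step `h`, so `j n ≤ j M`, and the product with `j n` is at most `β k`.
The Bessel roots are the case `h = π`, `s = 1 / 4`, `C = 1 / 8`, with constant `1`
in place of `1.01`.
-/

section

variable {𝕜 : Type*} [Field 𝕜] [LinearOrder 𝕜] [IsStrictOrderedRing 𝕜]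

theorem abs_add_div_add_sub_div_le_s9 {x y b d c : 𝕜} (hx : 0 ≤ x) (hxy : x ≤ y) (hy : 0 < y)
    (hb : b ∈ Set.Icc 0 c) (hd : d ∈ Set.Icc 0 c) :
    |(x + b) / (y + d) - x / y| ≤ c / (y + d) := by
  have hyd : 0 < y + d := add_pos_of_pos_of_nonneg hy hd.1
  have h_ratio : x / y * d ≤ c :=
    (mul_le_of_le_one_left hd.1 (div_le_one_of_le₀ hxy hy.le)).trans hd.2
  have h_eq : (x + b) / (y + d) - x / y = (b - x / y * d) / (y + d) := by
    field_simp
    ring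
  rw [h_eq, abs_div, abs_of_pos hyd]
  gcongr
  exact abs_sub_le_of_nonneg_of_le hb.1 hb.2 (mul_nonneg (div_nonneg hx hy.le) hd.1) h_ratio

theorem monotoneOn_of_sub_mul_mem_Icc {S : Set ℕ} {j : ℕ → 𝕜} {s h : 𝕜}
    (hj : ∀ n ∈ S, j n - (n - s) * h ∈ Set.Icc 0 h) : MonotoneOn j S := by
  intro m hm n hn hmn
  obtain rfl | hlt := hmn.eq_or_lt
  · rfl
  have h_nonneg : 0 ≤ h := (hj m hm).1.trans (hj m hm).2
  have h_succ : (m : 𝕜) + 1 ≤ n := by exact_mod_cast hlt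
  calc j m ≤ (m - s) * h + h := sub_le_iff_le_add'.mp (hj m hm).2
    _ = (m + 1 - s) * h := by ring
    _ ≤ (n - s) * h := by gcongr
    _ ≤ j n := sub_nonneg.mp (hj n hn).1

variable {M : ℕ} {j : ℕ → 𝕜} {s h C : 𝕜}

theorem monotoneOn_of_sub_mul_mem_Icc_div (hs : s < 1) (hh : 0 < h) (hC : C ≤ (1 - s) * h ^ 2)
    (hj : ∀ n ∈ Set.Icc 1 M, j n - (n - s) * h ∈ Set.Icc 0 (C / ((n - s) * h))) :
    MonotoneOn j (Set.Icc 1 M) := by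
  refine monotoneOn_of_sub_mul_mem_Icc fun n hn ↦ Set.Icc_subset_Icc_right ?_ (hj n hn)
  have h_one_le : (1 : 𝕜) ≤ n := by exact_mod_cast hn.1
  have h_pos : 0 < (n - s) * h := mul_pos (by linarith) hh
  rw [div_le_iff₀ h_pos]
  calc C ≤ (1 - s) * h ^ 2 := hC
    _ ≤ (n - s) * h ^ 2 := by gcongr
    _ = h * ((n - s) * h) := by ring

theorem abs_div_sub_div_le_of_sub_mul_mem_Icc_div (hs : s < 1) (hh : 0 < h)
    (hj : ∀ n ∈ Set.Icc 1 M, j n - (n - s) * h ∈ Set.Icc 0 (C / ((n - s) * h)))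
    {k : ℕ} (hk : k ∈ Set.Icc 1 M) :
    |j k / j M - (k - s) / (M - s)| ≤ C / ((k - s) * h) / j M := by
  have h_one_le : (1 : 𝕜) ≤ k := by exact_mod_cast hk.1
  have h_le : (k : 𝕜) ≤ M := by exact_mod_cast hk.2
  have hxk : 0 < (k - s) * h := mul_pos (by linarith) hh
  have hxkM : (k - s) * h ≤ (M - s) * h := by gcongr
  have hbk := hj k hk
  have hbM := hj M ⟨hk.1.trans hk.2, le_rfl⟩
  have hC : 0 ≤ C := by simpa using (le_div_iff₀ hxk).mp (hbk.1.trans hbk.2)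
  have hβ : C / ((M - s) * h) ≤ C / ((k - s) * h) := by gcongr
  simpa only [add_sub_cancel, mul_div_mul_right _ _ hh.ne'] using
    abs_add_div_add_sub_div_le_s9 hxk.le hxkM (hxk.trans_le hxkM) hbk
      (Set.Icc_subset_Icc_right hβ hbM)

theorem perturbation_times_root_bound_general (hs : s < 1) (hh : 0 < h)
    (hC : C ≤ (1 - s) * h ^ 2)
    (hj : ∀ n : ℕ, 1 ≤ n → n ≤ M → ∃ b : 𝕜,
      j n = (n - s) * h + b ∧ 0 ≤ b ∧ b ≤ C / ((n - s) * h))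
    {k n : ℕ} (hk : 1 ≤ k) (hkM : k ≤ M) (hn : 1 ≤ n) (hnM : n ≤ M) :
    |j k / j M - (k - s) / (M - s)| * j n ≤ C / ((k - s) * h) := by
  have h_mem : ∀ m ∈ Set.Icc 1 M, j m - (m - s) * h ∈ Set.Icc 0 (C / ((m - s) * h)) := by
    rintro m ⟨hm, hmM⟩
    obtain ⟨b, hjm, hb⟩ := hj m hm hmM
    rwa [hjm, add_sub_cancel_left]
  have hM : M ∈ Set.Icc 1 M := ⟨hk.trans hkM, le_rfl⟩
  have h_le : j n ≤ j M :=
    monotoneOn_of_sub_mul_mem_Icc_div hs hh hC h_mem ⟨hn, hnM⟩ hM hnM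
  have h_pos : 0 < j M := by
    have h_one_le : (1 : 𝕜) ≤ M := by exact_mod_cast hM.1
    exact (mul_pos (by linarith) hh).trans_le (sub_nonneg.mp (h_mem M hM).1)
  calc |j k / j M - (k - s) / (M - s)| * j n
      ≤ |j k / j M - (k - s) / (M - s)| * j M := by gcongr
    _ ≤ C / ((k - s) * h) :=
        (le_div_iff₀ h_pos).mp
          (abs_div_sub_div_le_of_sub_mul_mem_Icc_div hs hh h_mem ⟨hk, hkM⟩)

end

/-- Bound on the perturbation arguments `|e_{k,N}| · j_n` arising in the matrix
decomposition used for the discrete Hankel transform. -/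
theorem perturbation_times_root_bound (N : ℕ) (hN : 1 ≤ N) (j : ℕ → ℝ)
    (hj : ∀ n : ℕ, 1 ≤ n → n ≤ N + 1 → ∃ b : ℝ,
      j n = ((n : ℝ) - 1 / 4) * Real.pi + b ∧ 0 ≤ b ∧
        b ≤ 1 / (8 * ((n : ℝ) - 1 / 4) * Real.pi)) :
    ∀ k n : ℕ, 1 ≤ k → k ≤ N → 1 ≤ n → n ≤ N →
      |j k / j (N + 1) - ((k : ℝ) - 1 / 4) / ((N : ℝ) + 3 / 4)| * j n ≤
        1.01 / (8 * ((k : ℝ) - 1 / 4) * Real.pi) := by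
  intro k n hk hkN hn hnN
  have h_pos : (0 : ℝ) < k - 1 / 4 := by linarith [show (1 : ℝ) ≤ k by exact_mod_cast hk]
  have h_small : (1 / 8 : ℝ) ≤ (1 - 1 / 4) * Real.pi ^ 2 := by nlinarith [Real.pi_gt_three]
  rw [show (N : ℝ) + 3 / 4 = (N + 1 : ℕ) - 1 / 4 by push_cast; ring]
  calc _ ≤ 1 / 8 / (((k : ℝ) - 1 / 4) * Real.pi) :=
        perturbation_times_root_bound_general (by norm_num) Real.pi_pos h_small
          (by simpa only [div_div, mul_assoc] using hj) hk (by lia) hn (by lia)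
    _ = 1 / (8 * ((k : ℝ) - 1 / 4) * Real.pi) := by rw [div_div, ← mul_assoc]
    _ ≤ 1.01 / (8 * ((k : ℝ) - 1 / 4) * Real.pi) := by gcongr; norm_num
end
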